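/- For every n ≥ 0, q_n equals the product of all primes p such that p ≤ M_n and s_p(n+1) ≥ p, where M_n = (n+2)/2 if n is even and (n+2)/3 if n is odd, and s_p(m) denotes the sum of the base-p digits of m. -/

import Mathlib

/-!
Write `N = n + 1`. Faulhaber's formula gives `P = 0^n + ∑_{j < N} (C(N, j) B'_j / N) X^(N - j)`.
The term `j = 0` forces `N ∣ d`, so `d = N * D` with `D` the least positive integer clearing the
denominators of all `C(N, j) B'_j`, `j < N`.

By von Staudt–Clausen, `p` divides the denominator of some `C(N, j) B'_j` exactly when there is
`0 < j < N` with `p - 1 ∣ j` and `p ∤ C(N, j)`, always to the first power (`j = 1` matters only for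
`p = 2`). By Kummer, `p ∤ C(N, j)` means that `j` and `N - j` add without carries, hence
`s_p(N) = s_p(j) + s_p(N - j)`; as `s_p(j) ≡ j` modulo `p - 1`, this gives `s_p(N) ≥ p`
(`le_digits_sum`). If conversely `s_p(N) ≥ p`, choosing part of the digits of `N` with total
`p - 1` yields such a `j` by Lucas (`exists_digits_sum_eq`, `exists_index`). Hence `D` is the
product of the primes `p` with `s_p(N) ≥ p`, and for these the bound `p ≤ M_n` is automatic
(`bound_of_le_digits_sum`).
-/

open Polynomial Finset

/-- `P` agrees at every natural `x` with the power sum `1^n + 2^n + ... + x^n`. -/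
def evalPS (n : ℕ) (P : Polynomial ℚ) : Prop :=
  ∀ x : ℕ, P.eval (x : ℚ) = ∑ k ∈ Finset.range (x + 1), (k : ℚ) ^ n

/-- `P` agrees at every natural `x` with `1^n + 2^n + ... + (x-1)^n`. -/
def evalPS' (n : ℕ) (P : Polynomial ℚ) : Prop :=
  ∀ x : ℕ, P.eval (x : ℚ) = ∑ k ∈ Finset.range x, (k : ℚ) ^ n

/-- all coefficients of `P` are integers. -/
def isIntPoly (P : Polynomial ℚ) : Prop := ∀ i, ∃ z : ℤ, P.coeff i = (z : ℚ)

/-- `d` is the least positive integer such that `d • P` has integer coefficients. -/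
def isDenom (P : Polynomial ℚ) (d : ℕ) : Prop :=
  0 < d ∧ isIntPoly ((d : ℚ) • P) ∧
    ∀ e : ℕ, 0 < e → isIntPoly ((e : ℚ) • P) → d ≤ e

/-! ### Digit sums and binomial coefficients modulo a prime -/

lemma digits_sum_step {p : ℕ} (hp : p.Prime) (n : ℕ) :
    (Nat.digits p n).sum = n % p + (Nat.digits p (n / p)).sum := by
  rcases Nat.eq_zero_or_pos n with rfl | hn
  · simp
  · rw [Nat.digits_def' hp.one_lt hn]; simp

lemma sub_one_dvd_sub_digits_sum {p : ℕ} (hp : p.Prime) (n : ℕ) :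
    p - 1 ∣ n - (Nat.digits p n).sum := by
  have := Fact.mk hp
  exact ⟨_, (sub_one_mul_padicValNat_factorial n).symm⟩

lemma digits_sum_pos {p n : ℕ} (hp : p.Prime) (hn : 0 < n) : 0 < (Nat.digits p n).sum := by
  induction n using Nat.strong_induction_on with
  | _ n ih =>
    rw [digits_sum_step hp]
    rcases Nat.eq_zero_or_pos (n % p) with h | h
    · have : 0 < n / p := Nat.div_pos (Nat.le_of_dvd hn (Nat.dvd_of_mod_eq_zero h)) hp.pos
      have := ih _ (Nat.div_lt_self hn hp.one_lt) this
      omega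
    · omega

/-- Part of the base-`p` digits of `N` can be selected so as to have any prescribed sum
`t ≤ s_p(N)`, and the selected number `j` satisfies `p ∤ C(N, j)` by the theorem of Lucas. -/
lemma exists_digits_sum_eq {p : ℕ} (hp : p.Prime) (N : ℕ) :
    ∀ t ≤ (Nat.digits p N).sum, ∃ j ≤ N, (Nat.digits p j).sum = t ∧ ¬ p ∣ N.choose j := by
  have := Fact.mk hp
  induction N using Nat.strong_induction_on with
  | _ N ih =>
    intro t ht
    rcases Nat.eq_zero_or_pos N with rfl | hN
    · refine ⟨0, le_rfl, ?_, ?_⟩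
      · simp at ht; simp [ht]
      · simpa using hp.one_lt.ne'
    -- use the higher digits first, and the lowest digit only for what remains
    obtain ⟨b, t', hb, ht', htb⟩ : ∃ b t', b ≤ N % p ∧ t' ≤ (Nat.digits p (N / p)).sum ∧
        t = b + t' := by
      rw [digits_sum_step hp] at ht
      by_cases h : t ≤ (Nat.digits p (N / p)).sum
      · exact ⟨0, t, by omega, h, by omega⟩
      · exact ⟨t - (Nat.digits p (N / p)).sum, (Nat.digits p (N / p)).sum, by omega, le_rfl,
          by omega⟩
    obtain ⟨a, ha, hat, hac⟩ := ih (N / p) (Nat.div_lt_self hN hp.one_lt) t' ht'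
    have hbp : b < p := hb.trans_lt (Nat.mod_lt _ hp.pos)
    have hmod : (b + p * a) % p = b := by
      rw [Nat.add_mul_mod_self_left, Nat.mod_eq_of_lt hbp]
    have hdiv : (b + p * a) / p = a := by
      rw [Nat.add_mul_div_left _ _ hp.pos, Nat.div_eq_of_lt hbp, zero_add]
    refine ⟨b + p * a, ?_, ?_, ?_⟩
    · have h1 := Nat.mod_add_div N p
      have h2 := Nat.mul_le_mul_left p ha
      omega
    · rw [digits_sum_step hp, hmod, hdiv, hat, htb]
    · have hL := Choose.choose_modEq_choose_mod_mul_choose_div_nat (p := p) (n := N)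
        (k := b + p * a)
      rw [hmod, hdiv] at hL
      rw [hL.dvd_iff dvd_rfl, hp.dvd_mul, not_or]
      refine ⟨fun h => ?_, hac⟩
      -- a binomial coefficient `C(m, b)` with `m < p` divides `m!`, which is prime to `p`
      have h1 : p ∣ (N % p).factorial :=
        h.trans ⟨_, by rw [← Nat.choose_mul_factorial_mul_factorial hb, mul_assoc]⟩
      exact absurd ((hp.dvd_factorial).1 h1) (not_le.2 (Nat.mod_lt _ hp.pos))

lemma le_digits_sum {p N j : ℕ} (hp : p.Prime) (hj : 0 < j) (hjN : j < N) (hpj : p - 1 ∣ j)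
    (hc : ¬ p ∣ N.choose j) : p ≤ (Nat.digits p N).sum := by
  have := Fact.mk hp
  have hK := sub_one_mul_padicValNat_choose_eq_sub_sum_digits (p := p) hjN.le
  rw [padicValNat.eq_zero_of_not_dvd hc, mul_zero] at hK
  have h1 := digits_sum_pos hp (Nat.sub_pos_of_lt hjN)
  have h2 := digits_sum_pos hp hj
  have h3 := (Nat.dvd_sub_iff_right (Nat.digit_sum_le p j) hpj).1
    (sub_one_dvd_sub_digits_sum hp j)
  have h4 := Nat.le_of_dvd h2 h3
  omega

/-- Converse of `le_digits_sum`. The last conjunct ensures that `p` divides the denominator of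
`B'_j`: for even `j` by von Staudt–Clausen, and otherwise because `B'_1 = 1/2`. -/
lemma exists_index {p N : ℕ} (hp : p.Prime) (h : p ≤ (Nat.digits p N).sum) :
    ∃ j, 0 < j ∧ j < N ∧ p - 1 ∣ j ∧ ¬ p ∣ N.choose j ∧ (Even j ∨ (j = 1 ∧ p = 2)) := by
  have h2 := hp.two_le
  obtain ⟨j, hjN, hjs, hjc⟩ := exists_digits_sum_eq hp N (p - 1) (by omega)
  have hj0 : 0 < j := by
    rcases Nat.eq_zero_or_pos j with rfl | h0
    · simp at hjs; omega
    · exact h0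
  have hlt : j < N := by
    rcases hjN.lt_or_eq with h0 | rfl
    · exact h0
    · omega
  have hdvd : p - 1 ∣ j := by
    have := sub_one_dvd_sub_digits_sum hp j
    rw [hjs] at this
    have h5 := Nat.digit_sum_le p j
    exact (Nat.dvd_sub_iff_left (by omega) dvd_rfl).1 this
  rcases hp.eq_two_or_odd' with rfl | hodd
  · rcases Nat.even_or_odd N with hN | hN
    · refine ⟨j, hj0, hlt, hdvd, hjc, Or.inl ?_⟩
      -- `j C(N, j) = N C(N - 1, j - 1)` is even while `C(N, j)` is odd
      obtain ⟨i, rfl⟩ := Nat.exists_eq_succ_of_ne_zero hj0.ne'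
      obtain ⟨M, rfl⟩ := Nat.exists_eq_succ_of_ne_zero (by omega : N ≠ 0)
      have := Nat.add_one_mul_choose_eq M i
      have h6 : 2 ∣ (M + 1).choose (i + 1) * (i + 1) := this ▸ hN.two_dvd.mul_right _
      exact even_iff_two_dvd.2 ((Nat.prime_two.dvd_mul.1 h6).resolve_left hjc)
    · refine ⟨1, one_pos, by omega, by simp, ?_, Or.inr ⟨rfl, rfl⟩⟩
      rw [Nat.choose_one_right]
      exact hN.not_two_dvd_nat
  · refine ⟨j, hj0, hlt, hdvd, hjc, Or.inl ?_⟩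
    obtain ⟨k, rfl⟩ := hodd
    exact even_iff_two_dvd.2 ((Dvd.intro k (by omega)).trans hdvd)

/-- `N = a p + b` has `s_p(N) ≤ a + b` and `N = (a + b) + a (p - 1)`. For even `N` and odd `p` the
digit sum is even as well, hence at least `p + 1`, so that `a ≥ 2`. -/
lemma bound_of_le_digits_sum {p n : ℕ} (hp : p.Prime) (h : p ≤ (Nat.digits p (n + 1)).sum) :
    if Even n then 2 * p ≤ n + 2 else 3 * p ≤ n + 2 := by
  have h2 := hp.two_le
  have hs := digits_sum_step hp (n + 1)
  have ha := Nat.digit_sum_le p ((n + 1) / p)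
  have hb := Nat.mod_lt (n + 1) hp.pos
  have hN := Nat.mod_add_div (n + 1) p
  have hd := sub_one_dvd_sub_digits_sum hp (n + 1)
  have hle := Nat.digit_sum_le p (n + 1)
  set a := (n + 1) / p
  set b := (n + 1) % p
  split_ifs with hn
  · have : 1 ≤ a := by omega
    nlinarith
  · rw [Nat.not_even_iff_odd] at hn
    obtain ⟨m, rfl⟩ := hn
    rcases hp.eq_two_or_odd' with rfl | hodd
    · have hb0 : b = 0 := by omega
      -- `a ≥ 3`, since the binary digit sum of `2` is `1`
      have : a ≠ 2 := by
        intro h0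
        rw [h0] at hs
        have h22 : (Nat.digits 2 2).sum = 1 := by norm_num
        omega
      omega
    · obtain ⟨k, rfl⟩ := hodd
      have h3 : 2 ∣ 2 * m + 1 + 1 - (Nat.digits (2 * k + 1) (2 * m + 1 + 1)).sum :=
        (Dvd.intro k (by omega)).trans hd
      have h4 : 2 * k + 2 ≤ b + a := by omega
      have : 2 ≤ a := by omega
      have := Nat.mul_le_mul_left (2 * k) this
      nlinarith

/-! ### Faulhaber's formula -/

/-- **Faulhaber's formula** as an identity of polynomials; the constant `0^n` accounts for the summand `k = 0`
when `n = 0`. -/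
lemma evalPS_eq {n : ℕ} {P : Polynomial ℚ} (hP : evalPS n P) :
    P = C (0 ^ n) + ∑ i ∈ range (n + 1),
      monomial (n + 1 - i) (bernoulli' i * (n + 1).choose i / (n + 1)) := by
  apply Polynomial.eq_of_infinite_eval_eq
  refine (Set.infinite_range_of_injective (Nat.cast_injective (R := ℚ))).mono ?_
  rintro _ ⟨x, rfl⟩
  simp only [Set.mem_ofPred_eq, hP x, eval_add, eval_C, eval_finsetSum, eval_monomial]
  rw [Finset.range_eq_Ico, Finset.sum_eq_sum_Ico_succ_bot (Nat.succ_pos x), sum_Ico_pow]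
  simp only [Nat.cast_zero]
  congr 1
  rw [Finset.range_eq_Ico]
  exact Finset.sum_congr rfl fun i _ => by ring

lemma coeff_evalPS {n : ℕ} {P : Polynomial ℚ} (hP : evalPS n P) {j : ℕ} (hj : j < n + 1) :
    P.coeff (n + 1 - j) = bernoulli' j * (n + 1).choose j / (n + 1) := by
  rw [evalPS_eq hP, coeff_add, finsetSum_coeff, coeff_C, if_neg (by omega), zero_add,
    Finset.sum_eq_single j]
  · rw [coeff_monomial, if_pos rfl]
  · intro i hi hij
    rw [Finset.mem_range] at hi
    rw [coeff_monomial, if_neg (by omega)]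
  · intro h
    exact absurd (Finset.mem_range.2 hj) h

lemma coeff_evalPS_zero {n : ℕ} {P : Polynomial ℚ} (hP : evalPS n P) : P.coeff 0 = 0 ^ n := by
  rw [evalPS_eq hP, coeff_add, finsetSum_coeff, coeff_C, if_pos rfl, Finset.sum_eq_zero, add_zero]
  intro i hi
  rw [Finset.mem_range] at hi
  rw [coeff_monomial, if_neg (by omega)]

lemma coeff_evalPS_of_gt {n : ℕ} {P : Polynomial ℚ} (hP : evalPS n P) {i : ℕ} (hi : n + 1 < i) :
    P.coeff i = 0 := by
  rw [evalPS_eq hP, coeff_add, finsetSum_coeff, coeff_C, if_neg (by omega), zero_add,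
    Finset.sum_eq_zero]
  intro j hj
  rw [coeff_monomial, if_neg (by omega)]

lemma isIntPoly_smul_iff {n : ℕ} {P : Polynomial ℚ} (hP : evalPS n P) (f : ℕ) :
    isIntPoly ((((n + 1) * f : ℕ) : ℚ) • P) ↔
      ∀ j < n + 1, ∃ z : ℤ, (f : ℚ) * ((n + 1).choose j * bernoulli' j) = z := by
  have hn : (n + 1 : ℚ) ≠ 0 := by positivity
  have key : ∀ j < n + 1, ((((n + 1) * f : ℕ) : ℚ) • P).coeff (n + 1 - j) =
      (f : ℚ) * ((n + 1).choose j * bernoulli' j) := by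
    intro j hj
    rw [coeff_smul, coeff_evalPS hP hj, smul_eq_mul]
    push_cast
    field_simp
  constructor
  · intro h j hj
    rw [← key j hj]
    exact h _
  · intro h i
    rcases Nat.eq_zero_or_pos i with rfl | hi
    · exact ⟨(((n + 1) * f : ℕ) : ℤ) * 0 ^ n, by
        rw [coeff_smul, coeff_evalPS_zero hP, smul_eq_mul]; push_cast; rfl⟩
    · by_cases hi' : n + 1 < i
      · exact ⟨0, by rw [coeff_smul, coeff_evalPS_of_gt hP hi']; simp⟩
      · have := key (n + 1 - i) (by omega)
        rw [show n + 1 - (n + 1 - i) = i by omega] at this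
        rw [this]
        exact h _ (by omega)

/-! ### Denominators of the products of binomial and Bernoulli numbers -/

/-- If `m ∑_{q ∈ S} 1/q` is an integer for a finite set `S` of primes, every prime in `S`
divides `m`. -/
lemma dvd_of_sum_inv {S : Finset ℕ} (hS : ∀ q ∈ S, q.Prime) {m z : ℤ}
    (h : (m : ℚ) * ∑ q ∈ S, (1 : ℚ) / q = z) {p : ℕ} (hp : p ∈ S) : (p : ℤ) ∣ m := by
  have hpp := hS p hp
  have hp0 : (p : ℚ) ≠ 0 := by exact_mod_cast hpp.ne_zero
  set R : ℕ := ∏ q ∈ S.erase p, q with hR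
  -- multiplying by `R` clears every denominator but `p`
  obtain ⟨w, hw⟩ : ∃ w : ℤ, (R : ℚ) * ∑ q ∈ S.erase p, (1 : ℚ) / q = w := by
    refine ⟨((∑ q ∈ S.erase p, R / q : ℕ) : ℤ), ?_⟩
    rw [Finset.mul_sum, Int.cast_natCast, Nat.cast_sum]
    refine Finset.sum_congr rfl fun q hq => ?_
    have hq0 : (q : ℚ) ≠ 0 := by exact_mod_cast (hS q (Finset.mem_of_mem_erase hq)).ne_zero
    rw [Nat.cast_div (Finset.dvd_prod_of_mem _ hq) hq0]
    ring
  rw [← Finset.add_sum_erase S _ hp] at h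
  have h1 : (m * R : ℤ) = p * (R * z - m * w) := by
    have : (m : ℚ) * R = p * (R * z - m * w) := by
      rw [← h, ← hw]; field_simp; ring
    exact_mod_cast this
  have hcop : IsCoprime (p : ℤ) (R : ℤ) := by
    rw [Nat.isCoprime_iff_coprime, hR]
    refine Nat.Coprime.prod_right fun q hq => ?_
    exact (Nat.coprime_primes hpp (hS q (Finset.mem_of_mem_erase hq))).2
      (Finset.ne_of_mem_erase hq).symm
  exact hcop.dvd_of_dvd_mul_right ⟨_, h1⟩

lemma vonStaudt' (k : ℕ) : ∃ T : ℤ, bernoulli' (2 * k) =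
    T - ∑ p ∈ range (2 * k + 2) with p.Prime ∧ (p - 1) ∣ 2 * k, (1 : ℚ) / p := by
  obtain ⟨T, hT⟩ := Bernoulli.vonStaudt_clausen k
  refine ⟨T, ?_⟩
  rw [← bernoulli_eq_bernoulli'_of_ne_one (by omega), hT]
  ring

/-- The primes `p` with `s_p(n + 1) ≥ p`; the cut-off `n + 3` is harmless, since
`s_p(n + 1) ≤ n + 1`. -/
def bigDigitSumPrimes (n : ℕ) : Finset ℕ :=
  (range (n + 3)).filter fun p => p.Prime ∧ p ≤ (Nat.digits p (n + 1)).sum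

lemma mem_bigDigitSumPrimes {n p : ℕ} :
    p ∈ bigDigitSumPrimes n ↔ p.Prime ∧ p ≤ (Nat.digits p (n + 1)).sum := by
  have := Nat.digit_sum_le p (n + 1)
  simp only [bigDigitSumPrimes, mem_filter, mem_range, and_iff_right_iff_imp]
  omega

lemma dvd_prod_mul_choose {n p j : ℕ} (hp : p.Prime) (hj : 0 < j) (hjN : j < n + 1)
    (hpj : p - 1 ∣ j) : p ∣ (∏ q ∈ bigDigitSumPrimes n, q) * (n + 1).choose j := by
  by_cases hc : p ∣ (n + 1).choose j
  · exact hc.mul_left _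
  · exact (Finset.dvd_prod_of_mem _
      (mem_bigDigitSumPrimes.2 ⟨hp, le_digits_sum hp hj hjN hpj hc⟩)).mul_right _

lemma prod_clears (n : ℕ) {j : ℕ} (hj : j < n + 1) :
    ∃ z : ℤ, ((∏ q ∈ bigDigitSumPrimes n, q : ℕ) : ℚ) * ((n + 1).choose j * bernoulli' j) = z := by
  have hdvd : ∀ p : ℕ, p.Prime → 0 < j → p - 1 ∣ j →
      p ∣ (∏ q ∈ bigDigitSumPrimes n, q) * (n + 1).choose j :=
    fun p hp h0 h => dvd_prod_mul_choose hp h0 hj h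
  set D := ∏ q ∈ bigDigitSumPrimes n, q
  rcases Nat.eq_zero_or_pos j with rfl | h0
  · exact ⟨D, by simp⟩
  rcases Nat.even_or_odd' j with ⟨k, rfl | rfl⟩
  · obtain ⟨T, hT⟩ := vonStaudt' k
    refine ⟨D * (n + 1).choose (2 * k) * T -
      ((∑ p ∈ range (2 * k + 2) with p.Prime ∧ (p - 1) ∣ 2 * k,
        D * (n + 1).choose (2 * k) / p : ℕ) : ℤ), ?_⟩
    rw [hT, ← mul_assoc, mul_sub, Finset.mul_sum, Int.cast_sub, Int.cast_natCast, Nat.cast_sum]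
    push_cast
    congr 1
    refine Finset.sum_congr rfl fun p hp => ?_
    obtain ⟨-, hpp, hpd⟩ := Finset.mem_filter.1 hp
    have hp0 : (p : ℚ) ≠ 0 := by exact_mod_cast hpp.ne_zero
    rw [Nat.cast_div (hdvd p hpp h0 hpd) hp0]
    push_cast
    ring
  · rcases Nat.eq_zero_or_pos k with rfl | hk
    · obtain ⟨c, hc⟩ := hdvd 2 Nat.prime_two h0 (by simp)
      refine ⟨c, ?_⟩
      have hc' : (D : ℚ) * ((n + 1).choose (2 * 0 + 1) : ℕ) = 2 * c := by exact_mod_cast hc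
      rw [← mul_assoc, hc', show 2 * 0 + 1 = 1 from rfl, bernoulli'_one]
      push_cast
      ring
    · exact ⟨0, by rw [bernoulli'_eq_zero_of_odd ⟨k, rfl⟩ (by omega)]; simp⟩

lemma dvd_of_clears {n f : ℕ}
    (h : ∀ j < n + 1, ∃ z : ℤ, (f : ℚ) * ((n + 1).choose j * bernoulli' j) = z)
    {p : ℕ} (hp : p ∈ bigDigitSumPrimes n) : p ∣ f := by
  obtain ⟨hpp, hps⟩ := mem_bigDigitSumPrimes.1 hp
  obtain ⟨j, h0, hj, hpj, hc, hcase⟩ := exists_index hpp hps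
  obtain ⟨z, hz⟩ := h j hj
  suffices (p : ℤ) ∣ ((f * (n + 1).choose j : ℕ) : ℤ) from
    (hpp.dvd_mul.1 (Int.natCast_dvd_natCast.1 this)).resolve_right hc
  rcases hcase with he | ⟨rfl, rfl⟩
  · obtain ⟨k, rfl⟩ := he.two_dvd
    obtain ⟨T, hT⟩ := vonStaudt' k
    refine dvd_of_sum_inv (S := {p ∈ range (2 * k + 2) | p.Prime ∧ (p - 1) ∣ 2 * k})
      (z := f * (n + 1).choose (2 * k) * T - z) (fun q hq => (Finset.mem_filter.1 hq).2.1) ?_ ?_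
    · push_cast
      rw [← hz, hT]
      ring
    · have := Nat.le_of_dvd h0 hpj
      simp only [mem_filter, mem_range]
      exact ⟨by omega, hpp, hpj⟩
  · refine ⟨z, ?_⟩
    rw [bernoulli'_one] at hz
    have : ((f * (n + 1).choose 1 : ℕ) : ℚ) = 2 * z := by
      rw [← hz]; push_cast; ring
    exact_mod_cast this

/-! ### The denominator of the power sum polynomial -/

theorem stmt7 (n : ℕ) (P : Polynomial ℚ) (d : ℕ)
    (hP : evalPS n P) (hd : isDenom P d) :
    d / (n + 1) =
      ∏ p ∈ (Finset.range (n + 3)).filter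
        (fun p => p.Prime ∧ (if Even n then 2 * p ≤ n + 2 else 3 * p ≤ n + 2) ∧
          p ≤ (Nat.digits p (n + 1)).sum), p := by
  have hS : (Finset.range (n + 3)).filter
        (fun p => p.Prime ∧ (if Even n then 2 * p ≤ n + 2 else 3 * p ≤ n + 2) ∧
          p ≤ (Nat.digits p (n + 1)).sum) = bigDigitSumPrimes n := by
    refine Finset.filter_congr fun p _ => ?_
    exact ⟨fun h => ⟨h.1, h.2.2⟩, fun h => ⟨h.1, bound_of_le_digits_sum h.1 h.2, h.2⟩⟩
  rw [hS]
  obtain ⟨hd0, hdi, hmin⟩ := hd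
  -- the leading coefficient of `P` is `1 / (n + 1)`
  obtain ⟨f, rfl⟩ : n + 1 ∣ d := by
    obtain ⟨z, hz⟩ := hdi (n + 1)
    rw [coeff_smul, smul_eq_mul] at hz
    have h0 := coeff_evalPS hP (Nat.succ_pos n)
    simp only [Nat.sub_zero, bernoulli'_zero, Nat.choose_zero_right, Nat.cast_one, mul_one] at h0
    rw [h0] at hz
    have hn : (n + 1 : ℚ) ≠ 0 := by positivity
    have : (d : ℚ) = (n + 1) * z := by rw [← hz]; field_simp
    have h1 : (d : ℤ) = ((n + 1 : ℕ) : ℤ) * z := by exact_mod_cast this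
    exact Int.natCast_dvd_natCast.1 ⟨z, h1⟩
  rw [Nat.mul_div_cancel_left _ (Nat.succ_pos n)]
  have hD0 : 0 < ∏ q ∈ bigDigitSumPrimes n, q :=
    Finset.prod_pos fun q hq => (mem_bigDigitSumPrimes.1 hq).1.pos
  apply le_antisymm
  · refine Nat.le_of_mul_le_mul_left (hmin _ (by positivity) ?_) (Nat.succ_pos n)
    exact (isIntPoly_smul_iff hP _).2 fun j hj => prod_clears n hj
  · refine Nat.le_of_dvd (Nat.pos_of_mul_pos_left hd0) ?_
    exact Finset.prod_primes_dvd f (fun q hq => (mem_bigDigitSumPrimes.1 hq).1.prime)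
      fun q hq => dvd_of_clears ((isIntPoly_smul_iff hP f).1 hdi) hq
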